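/- Let X_1, …, X_n be upper extended negatively dependent random variables in a sub-linear expectation space with dominating constant K ≥ 1 and 𝔼[X_k] ≤ 0 for each k. Set S_n = Σ_{k=1}^n X_k, B_n = Σ_{k=1}^n 𝔼[X_k²] and M_{n,p,+} = Σ_{k=1}^n 𝔼[(X_k⁺)^p]. Then for any p ≥ 2 there exists a constant C_p ≥ 1 depending only on p such that for all x > 0 and 0 < δ ≤ 1: 𝕍(S_n ≥ x) ≤ C_p·δ^{−2p}·K·M_{n,p,+}/x^p + K·exp{ −x²/(2·B_n·(1+δ)) }. -/

import Mathlib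

open Filter MeasureTheory
open scoped ENNReal NNReal

noncomputable section

/-- A sub-linear expectation on `Ω`: a monotone, constant-preserving, sub-additive,
positively homogeneous functional on real random variables (with values in the
extended reals, so that random variables without a finite expectation are allowed). -/
structure SublinearExp (Ω : Type) where
  E : (Ω → ℝ) → EReal
  mono : ∀ X Y : Ω → ℝ, (∀ ω, X ω ≤ Y ω) → E X ≤ E Y
  const_eq : ∀ c : ℝ, E (fun _ => c) = (c : EReal)
  subadd : ∀ X Y : Ω → ℝ, E (fun ω => X ω + Y ω) ≤ E X + E Y
  pos_homog : ∀ lam : ℝ, 0 ≤ lam → ∀ X : Ω → ℝ,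
    E (fun ω => lam * X ω) = (lam : EReal) * E X

namespace SublinearExp

variable {Ω : Type}

/-- The conjugate expectation `ℰ[X] := −𝔼[−X]`. -/
def cE (SL : SublinearExp Ω) (X : Ω → ℝ) : EReal := - SL.E fun ω => - X ω

/-- The upper capacity `𝕍(A) := inf{𝔼[ξ] : 1_A ≤ ξ}`. -/
def V (SL : SublinearExp Ω) (A : Set Ω) : ℝ :=
  sInf {x : ℝ | ∃ ξ : Ω → ℝ,
    (∀ ω, A.indicator (fun _ => (1 : ℝ)) ω ≤ ξ ω) ∧ SL.E ξ = (x : EReal)}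

/-- The lower capacity `𝓋(A) := 1 − 𝕍(Aᶜ)`. -/
def vLow (SL : SublinearExp Ω) (A : Set Ω) : ℝ := 1 - SL.V Aᶜ

/-- The Choquet integral `C_𝕍(X) := ∫₀^∞ 𝕍(X ≥ t) dt` (of a non-negative r.v.). -/
def Choquet (SL : SublinearExp Ω) (X : Ω → ℝ) : ℝ≥0∞ :=
  ∫⁻ t in Set.Ioi (0 : ℝ), ENNReal.ofReal (SL.V {ω | t ≤ X ω})

/-- The outer capacity `𝕍*(A) := inf{Σ_n 𝕍(A_n) : A ⊆ ∪_n A_n}`. -/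
def Vout (SL : SublinearExp Ω) (A : Set Ω) : ℝ≥0∞ :=
  ⨅ (B : ℕ → Set Ω) (_ : A ⊆ ⋃ n, B n), ∑' n, ENNReal.ofReal (SL.V (B n))

/-- The upper capacity is continuous: continuous from below and from above. -/
def ContinuousCapacity (SL : SublinearExp Ω) : Prop :=
  (∀ A : ℕ → Set Ω, Monotone A →
    Tendsto (fun n => SL.V (A n)) atTop (nhds (SL.V (⋃ n, A n)))) ∧
  (∀ A : ℕ → Set Ω, Antitone A →
    Tendsto (fun n => SL.V (A n)) atTop (nhds (SL.V (⋂ n, A n))))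

/-- Bounded Lipschitz function on ℝ. -/
def IsBLip (g : ℝ → ℝ) : Prop :=
  (∃ L : NNReal, LipschitzWith L g) ∧ ∃ M : ℝ, ∀ x, |g x| ≤ M

/-- Local Lipschitz function on ℝ: `|φ(x) − φ(y)| ≤ C(1+|x|^m+|y|^m)|x−y|`. -/
def IsLocLip (φ : ℝ → ℝ) : Prop :=
  ∃ (C : ℝ) (m : ℕ), ∀ x y : ℝ, |φ x - φ y| ≤ C * (1 + |x| ^ m + |y| ^ m) * |x - y|

/-- Upper extended negative dependence (finite family) with dominating constant `K`:
`𝔼[∏ g_i(X_i)] ≤ K ∏ 𝔼[g_i(X_i)]` for all non-negative bounded Lipschitz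
non-decreasing `g_i`.  (Expectations of bounded functions are finite, whence
the `toReal`.) -/
def UENDFin (SL : SublinearExp Ω) (K : ℝ) {n : ℕ} (X : Fin n → Ω → ℝ) : Prop :=
  ∀ g : Fin n → ℝ → ℝ, (∀ i, IsBLip (g i)) → (∀ i, Monotone (g i)) →
    (∀ i x, 0 ≤ g i x) →
    SL.E (fun ω => ∏ i, g i (X i ω)) ≤
      ((K * ∏ i, (SL.E fun ω => g i (X i ω)).toReal : ℝ) : EReal)

/-- Upper extended negative dependence for a sequence. -/
def UEND (SL : SublinearExp Ω) (K : ℝ) (X : ℕ → Ω → ℝ) : Prop :=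
  ∀ n : ℕ, ∀ g : ℕ → ℝ → ℝ, (∀ i, IsBLip (g i)) → (∀ i, Monotone (g i)) →
    (∀ i x, 0 ≤ g i x) →
    SL.E (fun ω => ∏ i ∈ Finset.range n, g i (X i ω)) ≤
      ((K * ∏ i ∈ Finset.range n, (SL.E fun ω => g i (X i ω)).toReal : ℝ) : EReal)

/-- Lower extended negative dependence for a sequence. -/
def LEND (SL : SublinearExp Ω) (K : ℝ) (X : ℕ → Ω → ℝ) : Prop :=
  ∀ n : ℕ, ∀ g : ℕ → ℝ → ℝ, (∀ i, IsBLip (g i)) → (∀ i, Antitone (g i)) →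
    (∀ i x, 0 ≤ g i x) →
    SL.E (fun ω => ∏ i ∈ Finset.range n, g i (X i ω)) ≤
      ((K * ∏ i ∈ Finset.range n, (SL.E fun ω => g i (X i ω)).toReal : ℝ) : EReal)

/-- Extended negative dependence = upper and lower END. -/
def END (SL : SublinearExp Ω) (K : ℝ) (X : ℕ → Ω → ℝ) : Prop :=
  UEND SL K X ∧ LEND SL K X

/-- Upper extended negative dependence under the conjugate expectation `ℰ`
(finite family). -/
def UENDFinConj (SL : SublinearExp Ω) (K : ℝ) {n : ℕ} (X : Fin n → Ω → ℝ) : Prop :=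
  ∀ g : Fin n → ℝ → ℝ, (∀ i, IsBLip (g i)) → (∀ i, Monotone (g i)) →
    (∀ i x, 0 ≤ g i x) →
    SL.cE (fun ω => ∏ i, g i (X i ω)) ≤
      ((K * ∏ i, (SL.cE fun ω => g i (X i ω)).toReal : ℝ) : EReal)

/-- Upper extended negative dependence under the conjugate expectation (sequence). -/
def UENDconj (SL : SublinearExp Ω) (K : ℝ) (X : ℕ → Ω → ℝ) : Prop :=
  ∀ n : ℕ, ∀ g : ℕ → ℝ → ℝ, (∀ i, IsBLip (g i)) → (∀ i, Monotone (g i)) →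
    (∀ i x, 0 ≤ g i x) →
    SL.cE (fun ω => ∏ i ∈ Finset.range n, g i (X i ω)) ≤
      ((K * ∏ i ∈ Finset.range n, (SL.cE fun ω => g i (X i ω)).toReal : ℝ) : EReal)

/-- Lower extended negative dependence under the conjugate expectation (sequence). -/
def LENDconj (SL : SublinearExp Ω) (K : ℝ) (X : ℕ → Ω → ℝ) : Prop :=
  ∀ n : ℕ, ∀ g : ℕ → ℝ → ℝ, (∀ i, IsBLip (g i)) → (∀ i, Antitone (g i)) →
    (∀ i x, 0 ≤ g i x) →
    SL.cE (fun ω => ∏ i ∈ Finset.range n, g i (X i ω)) ≤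
      ((K * ∏ i ∈ Finset.range n, (SL.cE fun ω => g i (X i ω)).toReal : ℝ) : EReal)

/-- Extended negative dependence under the conjugate expectation. -/
def ENDconj (SL : SublinearExp Ω) (K : ℝ) (X : ℕ → Ω → ℝ) : Prop :=
  UENDconj SL K X ∧ LENDconj SL K X

/-- Extended independence of a sequence:
`𝔼[∏ ψ_i(X_i)] = ∏ 𝔼[ψ_i(X_i)]` for non-negative local Lipschitz `ψ_i`,
whenever the expectations involved are finite. -/
def ExtIndep (SL : SublinearExp Ω) (X : ℕ → Ω → ℝ) : Prop :=
  ∀ n : ℕ, ∀ ψ : ℕ → ℝ → ℝ, (∀ i, IsLocLip (ψ i)) → (∀ i x, 0 ≤ ψ i x) →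
    (∀ i ∈ Finset.range n, SL.E (fun ω => ψ i (X i ω)) ≠ ⊤) →
    SL.E (fun ω => ∏ i ∈ Finset.range n, ψ i (X i ω)) =
      ((∏ i ∈ Finset.range n, (SL.E fun ω => ψ i (X i ω)).toReal : ℝ) : EReal)

/-- Extended independence of two random variables. -/
def ExtIndepPair (SL : SublinearExp Ω) (Y Z : Ω → ℝ) : Prop :=
  ∀ ψ₁ ψ₂ : ℝ → ℝ, IsLocLip ψ₁ → IsLocLip ψ₂ →
    (∀ x, 0 ≤ ψ₁ x) → (∀ x, 0 ≤ ψ₂ x) →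
    SL.E (fun ω => ψ₁ (Y ω)) ≠ ⊤ → SL.E (fun ω => ψ₂ (Z ω)) ≠ ⊤ →
    SL.E (fun ω => ψ₁ (Y ω) * ψ₂ (Z ω)) =
      (((SL.E fun ω => ψ₁ (Y ω)).toReal * (SL.E fun ω => ψ₂ (Z ω)).toReal : ℝ) : EReal)

/-- Identically distributed: `𝔼[φ(X_i)] = 𝔼[φ(X_1)]` for all local Lipschitz `φ`. -/
def IdentDist (SL : SublinearExp Ω) (X : ℕ → Ω → ℝ) : Prop :=
  ∀ (i : ℕ) (φ : ℝ → ℝ), IsLocLip φ →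
    SL.E (fun ω => φ (X i ω)) = SL.E fun ω => φ (X 0 ω)

end SublinearExp

/-- `log x = ln(x ∨ e)`. -/
def paperLog (x : ℝ) : ℝ := Real.log (max x (Real.exp 1))

/-- `a_n = √(2 n log log n)` with the above convention for `log`. -/
def lilA (n : ℕ) : ℝ := Real.sqrt (2 * n * paperLog (paperLog n))

/-!
The proof is a truncated Chernoff bound. For a level `y > 0`, the event `S_n ≥ x` is covered by
`{∃ k, X_k > y}`, whose capacity is at most `M / y ^ p`, and by `{∑ min X_k y ≥ x}`, to which
Markov's inequality for `exp (t ∑ min X_k y)` applies: `u ↦ exp (t * min u y)` is an admissible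
test function for upper extended negative dependence. Each factor is controlled by
`exp (t * min u y) ≤ 1 + t u + (1 + δ) / 2 * (t u) ^ 2 + A (u⁺) ^ p`: a Taylor bound where
`t * min u y ≤ δ / 2`, and comparison of the exponential with a `p`-th power elsewhere. With
`y = x / 4`, `m = M / x ^ p` and `Λ = x ^ 2 / (B (1 + δ))`, choosing `t` so that
`exp (-(t x) / 2) = max m (exp (-Λ / 2))` balances the two error terms.
-/

section RealInequalities

open Real

theorem exp_le_one_add_add_sq_of_le_half {δ s : ℝ} (hδ0 : 0 ≤ δ) (hδ1 : δ ≤ 1) (hs : s ≤ δ / 2) :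
    exp s ≤ 1 + s + (1 + δ) / 2 * s ^ 2 := by
  rcases le_total s 0 with hs0 | hs0
  · have hinv : exp s * (1 + -s + (-s) ^ 2 / 2) ≤ 1 :=
      calc exp s * (1 + -s + (-s) ^ 2 / 2) ≤ exp s * exp (-s) := by
            gcongr
            exact quadratic_le_exp_of_nonneg (neg_nonneg.2 hs0)
        _ = 1 := by rw [← exp_add, add_neg_cancel, exp_zero]
    have htaylor : exp s ≤ 1 + s + s ^ 2 / 2 := by
      refine le_of_mul_le_mul_right (hinv.trans ?_) (by nlinarith : 0 < 1 + -s + (-s) ^ 2 / 2)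
      nlinarith [sq_nonneg (s ^ 2)]
    nlinarith [sq_nonneg s]
  · have htaylor := exp_bound' hs0 (by linarith) (n := 3) (by norm_num)
    norm_num [Finset.sum_range_succ, Nat.factorial] at htaylor
    have hcube : s ^ 3 ≤ δ / 2 * s ^ 2 := by
      rw [pow_succ']
      gcongr
    nlinarith [pow_nonneg hs0 3]

theorem div_le_mul_exp_sub_div {p η s σ : ℝ} (hp : 0 < p) (hη0 : 0 < η) (hη1 : η ≤ 1)
    (hηs : η ≤ s) (hsσ : s ≤ σ) : σ / s ≤ (1 + p) / η * exp ((σ - s) / p) := by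
  have hs : 0 < s := hη0.trans_le hηs
  have hgap : 0 ≤ σ - s := sub_nonneg.2 hsσ
  calc σ / s = 1 + (σ - s) / s := by field_simp; ring
    _ ≤ 1 / η + (σ - s) / η := by
      gcongr
      exact (one_le_div hη0).2 hη1
    _ = (1 + (σ - s)) / η := by ring
    _ ≤ (1 + (σ - s) + ((σ - s) / p + p)) / η :=
      div_le_div_of_nonneg_right
        (le_add_of_nonneg_right (add_nonneg (div_nonneg hgap hp.le) hp.le)) hη0.le
    _ = (1 + p) / η * ((σ - s) / p + 1) := by field_simp; ring
    _ ≤ (1 + p) / η * exp ((σ - s) / p) := by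
      gcongr
      exact add_one_le_exp _

theorem exp_le_rpow_mul_exp {p η s σ : ℝ} (hp : 0 < p) (hη0 : 0 < η) (hη1 : η ≤ 1)
    (hηs : η ≤ s) (hsσ : s ≤ σ) :
    exp s ≤ ((1 + p) / η) ^ p * (s / σ) ^ p * exp σ := by
  have hs : 0 < s := hη0.trans_le hηs
  have hσ : 0 < σ := hs.trans_le hsσ
  have hpow : 1 ≤ ((1 + p) / η) ^ p * (s / σ) ^ p * exp (σ - s) :=
    calc 1 ≤ ((1 + p) / η * exp ((σ - s) / p) * (s / σ)) ^ p := by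
          refine one_le_rpow ?_ hp.le
          calc (1 : ℝ) = σ / s * (s / σ) := by field_simp
            _ ≤ (1 + p) / η * exp ((σ - s) / p) * (s / σ) := by
              gcongr
              exact div_le_mul_exp_sub_div hp hη0 hη1 hηs hsσ
      _ = ((1 + p) / η) ^ p * (s / σ) ^ p * exp (σ - s) := by
          rw [mul_rpow (by positivity) (by positivity), mul_rpow (by positivity) (by positivity),
            ← exp_mul, div_mul_cancel₀ _ hp.ne']
          ring
  calc exp s ≤ ((1 + p) / η) ^ p * (s / σ) ^ p * exp (σ - s) * exp s :=
        le_mul_of_one_le_left (exp_pos s).le hpow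
    _ = ((1 + p) / η) ^ p * (s / σ) ^ p * exp σ := by
        rw [mul_assoc, ← exp_add, sub_add_cancel]

/-- The coefficient `A` of `(u⁺) ^ p` in the pointwise bound on the truncated exponential
`exp (t * min u y)`. It is what `exp_le_rpow_mul_exp` gives for `η = δ / 2` and `σ = t * y`. -/
def truncExpCoeff (p δ t y : ℝ) : ℝ := (2 * (1 + p) / δ) ^ p * (exp (t * y) / y ^ p)

theorem truncExpCoeff_nonneg {p δ y : ℝ} (hp : 0 ≤ p) (hδ : 0 ≤ δ) (t : ℝ) (hy : 0 ≤ y) :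
    0 ≤ truncExpCoeff p δ t y := by
  unfold truncExpCoeff
  positivity

theorem truncExpCoeff_div_div_four {p δ x : ℝ} (hp : 0 ≤ p) (hδ : 0 ≤ δ) (L : ℝ) (hx : 0 < x) :
    truncExpCoeff p δ (L / x) (x / 4) =
      (8 * (1 + p)) ^ p * δ ^ (-p) * (exp (L / 4) / x ^ p) := by
  have h8 : 8 * (1 + p) = 2 * (1 + p) * 4 := by ring
  rw [truncExpCoeff, div_mul_div_cancel₀ hx.ne', div_rpow hx.le (by norm_num), h8,
    mul_rpow (x := 2 * (1 + p)) (by positivity) (by norm_num), div_rpow (by positivity) hδ,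
    rpow_neg hδ]
  field_simp

theorem exp_mul_min_le {p δ t y : ℝ} (hp : 0 < p) (hδ0 : 0 < δ) (hδ1 : δ ≤ 1) (ht : 0 < t)
    (hy : 0 < y) (u : ℝ) :
    exp (t * min u y) ≤
      1 + t * u + (1 + δ) / 2 * t ^ 2 * u ^ 2 + truncExpCoeff p δ t y * max u 0 ^ p := by
  have hA : 0 ≤ truncExpCoeff p δ t y := truncExpCoeff_nonneg hp.le hδ0.le t hy.le
  have hmin : t * min u y ≤ t * u := by gcongr; exact min_le_left u y
  rcases le_total (t * min u y) (δ / 2) with hsmall | hlarge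
  · have hsq : min u y ^ 2 ≤ u ^ 2 := by
      rcases min_cases u y with ⟨h, -⟩ | ⟨h, hyu⟩
      · rw [h]
      · rw [h]; gcongr
    calc exp (t * min u y) ≤ 1 + t * min u y + (1 + δ) / 2 * (t * min u y) ^ 2 :=
          exp_le_one_add_add_sq_of_le_half hδ0.le hδ1 hsmall
      _ = 1 + t * min u y + (1 + δ) / 2 * t ^ 2 * min u y ^ 2 := by ring
      _ ≤ 1 + t * u + (1 + δ) / 2 * t ^ 2 * u ^ 2 := by gcongr
      _ ≤ _ := le_add_of_nonneg_right (by positivity)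
  · have hmin_pos : 0 < min u y := pos_of_mul_pos_right ((half_pos hδ0).trans_le hlarge) ht.le
    have hu : 0 < u := hmin_pos.trans_le (min_le_left u y)
    calc exp (t * min u y)
        ≤ ((1 + p) / (δ / 2)) ^ p * (t * min u y / (t * y)) ^ p * exp (t * y) :=
          exp_le_rpow_mul_exp hp (half_pos hδ0) (by linarith) hlarge
            (by gcongr; exact min_le_right u y)
      _ = truncExpCoeff p δ t y * min u y ^ p := by
          rw [truncExpCoeff, mul_div_mul_left _ _ ht.ne', div_rpow hmin_pos.le hy.le,
            div_div_eq_mul_div, mul_comm (1 + p) 2]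
          ring
      _ ≤ truncExpCoeff p δ t y * max u 0 ^ p := by
          gcongr
          exact (min_le_left u y).trans (le_max_left u 0)
      _ ≤ _ := le_add_of_nonneg_left (by positivity)

theorem one_le_sum_rpow_add_prod_exp {ι : Type*} [Fintype ι] {p t x y : ℝ} (hp : 0 ≤ p)
    (ht : 0 ≤ t) (hy : 0 < y) {u : ι → ℝ} (hu : x ≤ ∑ i, u i) :
    1 ≤ (y ^ p)⁻¹ * ∑ i, max (u i) 0 ^ p + exp (-(t * x)) * ∏ i, exp (t * min (u i) y) := by
  have hpow : ∀ i, 0 ≤ max (u i) 0 ^ p := fun i => by positivity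
  by_cases hlarge : ∃ i, y < u i
  · obtain ⟨i, hi⟩ := hlarge
    have hyp : y ^ p ≤ ∑ i, max (u i) 0 ^ p :=
      calc y ^ p ≤ max (u i) 0 ^ p := by gcongr; exact hi.le.trans (le_max_left _ _)
        _ ≤ _ := Finset.single_le_sum (fun j _ => hpow j) (Finset.mem_univ i)
    have hone : 1 ≤ (y ^ p)⁻¹ * ∑ i, max (u i) 0 ^ p := by
      rwa [inv_mul_eq_div, one_le_div (by positivity)]
    exact le_add_of_le_of_nonneg hone (by positivity)
  · push Not at hlarge
    have hprod : ∏ i, exp (t * min (u i) y) = exp (t * ∑ i, u i) := by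
      simp only [min_eq_left (hlarge _), ← exp_sum, Finset.mul_sum]
    refine le_add_of_nonneg_of_le
      (mul_nonneg (by positivity) (Finset.sum_nonneg fun i _ => hpow i)) ?_
    rw [hprod, ← exp_add]
    refine one_le_exp ?_
    linarith [mul_le_mul_of_nonneg_left hu ht]

theorem exp_le_one_add_mul_exp (r : ℝ) : exp r ≤ 1 + r * exp r := by
  have h := mul_le_mul_of_nonneg_left (one_sub_le_exp_neg r) (exp_pos r).le
  rw [← exp_add, add_neg_cancel, exp_zero] at h
  linarith

theorem exp_neg_half_mul_exp_le {D d m L : ℝ} (hD : 0 ≤ D) (hd : 1 ≤ d) (hm : 0 ≤ m)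
    (hL : 0 ≤ L) (hdm : d ^ 2 * m ≤ 1) (hmL : m ≤ exp (-L / 2)) :
    exp (-L / 2) * exp (D * d * (m * exp (L / 4))) ≤ exp (-L / 2) + D * exp D * (d ^ 2 * m) := by
  have hsq : (d * (m * exp (L / 4))) ^ 2 ≤ 1 :=
    calc (d * (m * exp (L / 4))) ^ 2 = d ^ 2 * m * (m * exp (L / 2)) := by
          have : exp (L / 2) = exp (L / 4) ^ 2 := by rw [← exp_nat_mul]; ring_nf
          rw [this]
          ring
      _ ≤ 1 * (exp (-L / 2) * exp (L / 2)) := by gcongr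
      _ = 1 := by rw [← exp_add, one_mul, neg_div, neg_add_cancel, exp_zero]
  have hR : D * d * (m * exp (L / 4)) ≤ D := by
    rw [mul_assoc]
    exact mul_le_of_le_one_right hD ((sq_le_one_iff₀ (by positivity)).1 hsq)
  have hL4 : exp (-L / 2) * exp (L / 4) ≤ 1 := by
    rw [← exp_add, exp_le_one_iff]
    linarith
  have hdd : d ≤ d ^ 2 := le_self_pow₀ hd two_ne_zero
  calc exp (-L / 2) * exp (D * d * (m * exp (L / 4)))
      ≤ exp (-L / 2) * (1 + D * d * (m * exp (L / 4)) * exp D) := by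
        gcongr
        exact (exp_le_one_add_mul_exp _).trans (by gcongr)
    _ = exp (-L / 2) + D * exp D * (d * m) * (exp (-L / 2) * exp (L / 4)) := by ring
    _ ≤ exp (-L / 2) + D * exp D * (d ^ 2 * m) * 1 := by gcongr
    _ = exp (-L / 2) + D * exp D * (d ^ 2 * m) := by rw [mul_one]

theorem le_of_forall_le_add_exp {a D d m K V Λ : ℝ} (ha : 0 ≤ a) (hD : 0 ≤ D) (hd : 1 ≤ d)
    (hm : 0 ≤ m) (hK : 1 ≤ K) (hV : V ≤ 1)
    (hbound : ∀ L, 0 < L → L ≤ Λ →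
      V ≤ a * m + K * (exp (-L / 2) * exp (D * d * (m * exp (L / 4))))) :
    V ≤ (a + 1 + D * exp D) * d ^ 2 * K * m + K * exp (-Λ / 2) := by
  have hd2 : 1 ≤ d ^ 2 := one_le_pow₀ hd
  rcases le_or_gt 1 (exp (-Λ / 2)) with hΛ | hΛ
  · exact hV.trans (le_add_of_nonneg_of_le (by positivity) (one_le_mul_of_one_le_of_one_le hK hΛ))
  rcases le_or_gt 1 (d ^ 2 * m) with hdm | hdm
  · have hC : 1 ≤ a + 1 + D * exp D := by linarith [mul_nonneg hD (exp_pos D).le]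
    have hone : 1 ≤ (a + 1 + D * exp D) * K * (d ^ 2 * m) :=
      one_le_mul_of_one_le_of_one_le (one_le_mul_of_one_le_of_one_le hC hK) hdm
    calc V ≤ (a + 1 + D * exp D) * K * (d ^ 2 * m) := hV.trans hone
      _ = (a + 1 + D * exp D) * d ^ 2 * K * m := by ring
      _ ≤ _ := le_add_of_nonneg_right (by positivity)
  have hmd : m ≤ d ^ 2 * m := le_mul_of_one_le_left hm hd2
  obtain ⟨L, hL⟩ : ∃ L, exp (-L / 2) = max m (exp (-Λ / 2)) :=
    ⟨-2 * log (max m (exp (-Λ / 2))), by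
      rw [neg_mul, neg_neg, mul_div_cancel_left₀ _ two_ne_zero,
        exp_log (lt_max_of_lt_right (exp_pos _))]⟩
  have hL0 : 0 < L := by
    have : exp (-L / 2) < 1 := hL ▸ max_lt (hmd.trans_lt hdm) hΛ
    linarith [exp_lt_one_iff.1 this]
  have hLΛ : L ≤ Λ := by
    have : exp (-Λ / 2) ≤ exp (-L / 2) := hL ▸ le_max_right _ _
    linarith [exp_le_exp.1 this]
  calc V ≤ a * m + K * (exp (-L / 2) * exp (D * d * (m * exp (L / 4)))) := hbound L hL0 hLΛ
    _ ≤ a * m + K * (exp (-L / 2) + D * exp D * (d ^ 2 * m)) := by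
        gcongr a * m + K * ?_
        exact exp_neg_half_mul_exp_le hD hd hm hL0.le hdm.le (hL ▸ le_max_left _ _)
    _ ≤ a * (K * (d ^ 2 * m)) + K * (d ^ 2 * m + exp (-Λ / 2) + D * exp D * (d ^ 2 * m)) := by
        gcongr
        · exact hmd.trans (le_mul_of_one_le_left (by positivity) hK)
        · exact hL.trans_le ((max_le_add_of_nonneg hm (exp_pos _).le).trans (by gcongr))
    _ = _ := by ring

end RealInequalities

namespace SublinearExp

open Real

variable {Ω : Type} (SL : SublinearExp Ω)

theorem E_nonneg {X : Ω → ℝ} (hX : ∀ ω, 0 ≤ X ω) : 0 ≤ SL.E X := by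
  simpa only [SL.const_eq 0, EReal.coe_zero] using SL.mono (fun _ => 0) X hX

theorem E_const_mul_le {X : Ω → ℝ} {a b : ℝ} (ha : 0 ≤ a) (hX : SL.E X ≤ (b : EReal)) :
    SL.E (fun ω => a * X ω) ≤ ((a * b : ℝ) : EReal) := by
  rw [SL.pos_homog a ha, EReal.coe_mul]
  exact mul_le_mul_of_nonneg_left hX (EReal.coe_nonneg.2 ha)

theorem E_add_le {X Y : Ω → ℝ} {a b : ℝ} (hX : SL.E X ≤ (a : EReal)) (hY : SL.E Y ≤ (b : EReal)) :
    SL.E (fun ω => X ω + Y ω) ≤ ((a + b : ℝ) : EReal) := by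
  rw [EReal.coe_add]
  exact (SL.subadd X Y).trans (add_le_add hX hY)

theorem E_sum_le {ι : Type*} (s : Finset ι) {X : ι → Ω → ℝ} {a : ι → ℝ}
    (hX : ∀ i ∈ s, SL.E (X i) ≤ (a i : EReal)) :
    SL.E (fun ω => ∑ i ∈ s, X i ω) ≤ ((∑ i ∈ s, a i : ℝ) : EReal) := by
  classical
  induction s using Finset.induction_on with
  | empty => simpa using (SL.const_eq 0).le
  | insert i s hi ih =>
    simp only [Finset.sum_insert hi]
    exact SL.E_add_le (hX i (Finset.mem_insert_self i s))
      (ih fun j hj => hX j (Finset.mem_insert_of_mem hj))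

theorem exists_E_eq_coe_of_sum_eq_coe {ι : Type*} [Fintype ι] {X : ι → Ω → ℝ} {c : ℝ}
    (hX : ∀ i ω, 0 ≤ X i ω) (hc : (c : EReal) = ∑ i, SL.E (X i)) :
    ∃ b : ι → ℝ, (∀ i, SL.E (X i) = (b i : EReal)) ∧ (∀ i, 0 ≤ b i) ∧ c = ∑ i, b i := by
  have hE : ∀ i, 0 ≤ SL.E (X i) := fun i => SL.E_nonneg (hX i)
  have hfin : ∀ i, SL.E (X i) = ((SL.E (X i)).toReal : EReal) := fun i => by
    have hle : SL.E (X i) ≤ (c : EReal) :=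
      hc ▸ Finset.single_le_sum (fun j _ => hE j) (Finset.mem_univ i)
    exact (EReal.coe_toReal (ne_top_of_le_ne_top (EReal.coe_ne_top c) hle)
      (ne_bot_of_le_ne_bot EReal.zero_ne_bot (hE i))).symm
  refine ⟨fun i => (SL.E (X i)).toReal, hfin, fun i => EReal.toReal_nonneg (hE i), ?_⟩
  let toEReal : ℝ →+ EReal := ⟨⟨Real.toEReal, EReal.coe_zero⟩, EReal.coe_add⟩
  rw [← EReal.coe_eq_coe_iff, hc, Finset.sum_congr rfl fun i _ => hfin i]
  exact (map_sum toEReal _ _).symm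

theorem V_le {A : Set Ω} {ξ : Ω → ℝ} {r : ℝ} (hξ0 : ∀ ω, 0 ≤ ξ ω) (hξ1 : ∀ ω ∈ A, 1 ≤ ξ ω)
    (hr : SL.E ξ ≤ (r : EReal)) : SL.V A ≤ r := by
  have hbdd : BddBelow {z : ℝ | ∃ ζ : Ω → ℝ,
      (∀ ω, A.indicator (fun _ => (1 : ℝ)) ω ≤ ζ ω) ∧ SL.E ζ = (z : EReal)} := by
    refine ⟨0, ?_⟩
    rintro z ⟨ζ, hζ, hz⟩
    rw [← EReal.coe_nonneg, ← hz]
    exact SL.E_nonneg fun ω =>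
      (Set.indicator_nonneg (fun _ _ => zero_le_one) ω).trans (hζ ω)
  have hfin : SL.E ξ = ((SL.E ξ).toReal : EReal) :=
    (EReal.coe_toReal (ne_top_of_le_ne_top (EReal.coe_ne_top r) hr)
      (ne_bot_of_le_ne_bot EReal.zero_ne_bot (SL.E_nonneg hξ0))).symm
  refine csInf_le_of_le hbdd
    ⟨ξ, fun ω => Set.indicator_apply_le' (hξ1 ω) fun _ => hξ0 ω, hfin⟩ ?_
  rwa [← EReal.coe_le_coe_iff, ← hfin]

theorem V_le_one (A : Set Ω) : SL.V A ≤ 1 :=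
  SL.V_le (fun _ => zero_le_one) (fun _ _ => le_rfl) (SL.const_eq 1).le

theorem isBLip_exp_of_le {f : ℝ → ℝ} {L : ℝ≥0} {c : ℝ} (hf : LipschitzWith L f)
    (hc : ∀ u, f u ≤ c) : IsBLip fun u => exp (f u) := by
  have hexp : LipschitzOnWith (exp c).toNNReal exp (Set.Iic c) :=
    (convex_Iic c).lipschitzOnWith_of_nnnorm_deriv_le (fun _ _ => differentiableAt_exp)
      fun v hv => by
        rw [Real.deriv_exp, ← NNReal.coe_le_coe, coe_nnnorm, norm_of_nonneg (exp_pos v).le,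
          coe_toNNReal _ (exp_pos c).le]
        exact exp_le_exp.2 hv
  refine ⟨⟨_, lipschitzOnWith_univ.1 (hexp.comp hf.lipschitzOnWith fun u _ => hc u)⟩,
    exp c, fun u => ?_⟩
  rw [abs_exp]
  exact exp_le_exp.2 (hc u)

theorem isBLip_exp_mul_min {t : ℝ} (ht : 0 ≤ t) (y : ℝ) : IsBLip fun u => exp (t * min u y) :=
  isBLip_exp_of_le ((lipschitzWith_smul t).comp (LipschitzWith.id.min_const y))
    fun u => mul_le_mul_of_nonneg_left (min_le_right u y) ht

theorem monotone_exp_mul_min {t : ℝ} (ht : 0 ≤ t) (y : ℝ) :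
    Monotone fun u => exp (t * min u y) :=
  fun _ _ huv => exp_le_exp.2 (mul_le_mul_of_nonneg_left (min_le_min_right y huv) ht)

variable {SL} {p δ t y : ℝ}

theorem E_exp_mul_min_le {b m : ℝ} (hp : 0 < p) (hδ0 : 0 < δ) (hδ1 : δ ≤ 1)
    (ht : 0 < t) (hy : 0 < y) {X : Ω → ℝ} (hX : SL.E X ≤ 0)
    (hb : SL.E (fun ω => X ω ^ 2) ≤ (b : EReal))
    (hm : SL.E (fun ω => max (X ω) 0 ^ p) ≤ (m : EReal)) :
    SL.E (fun ω => exp (t * min (X ω) y)) ≤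
      ((1 + (1 + δ) / 2 * t ^ 2 * b + truncExpCoeff p δ t y * m : ℝ) : EReal) := by
  refine (SL.mono _ _ fun ω => exp_mul_min_le hp hδ0 hδ1 ht hy (X ω)).trans ?_
  have hone : SL.E (fun _ => 1) ≤ ((1 : ℝ) : EReal) := (SL.const_eq 1).le
  have hlin : SL.E (fun ω => t * X ω) ≤ ((t * 0 : ℝ) : EReal) := SL.E_const_mul_le ht.le hX
  have hquad := SL.E_const_mul_le (a := (1 + δ) / 2 * t ^ 2) (by positivity) hb
  have htail := SL.E_const_mul_le (truncExpCoeff_nonneg hp.le hδ0.le t hy.le) hm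
  simpa only [mul_zero, add_zero] using
    SL.E_add_le (SL.E_add_le (SL.E_add_le hone hlin) hquad) htail

section UpperExtendedNegativeDependence

variable {n : ℕ} {X : Fin n → Ω → ℝ} {K : ℝ}

theorem UENDFin.one_le (hU : SL.UENDFin K X) : 1 ≤ K := by
  have hblip : IsBLip fun _ => 1 := ⟨⟨0, LipschitzWith.const 1⟩, 1, fun _ => abs_one.le⟩
  have h := hU (fun _ _ => 1) (fun _ => hblip) (fun _ => monotone_const)
    fun _ _ => zero_le_one
  simp only [Finset.prod_const_one, SL.const_eq, EReal.toReal_coe, mul_one] at h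
  exact EReal.coe_le_coe_iff.1 h

theorem UENDFin.E_prod_exp_mul_min_le {b m : Fin n → ℝ} (hU : SL.UENDFin K X) (hp : 0 < p)
    (hδ0 : 0 < δ) (hδ1 : δ ≤ 1) (ht : 0 < t) (hy : 0 < y) (hX : ∀ k, SL.E (X k) ≤ 0)
    (hb : ∀ k, SL.E (fun ω => X k ω ^ 2) ≤ (b k : EReal))
    (hm : ∀ k, SL.E (fun ω => max (X k ω) 0 ^ p) ≤ (m k : EReal)) :
    SL.E (fun ω => ∏ k, exp (t * min (X k ω) y)) ≤
      ((K * exp ((1 + δ) / 2 * t ^ 2 * ∑ k, b k + truncExpCoeff p δ t y * ∑ k, m k) : ℝ) :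
        EReal) := by
  have hE0 : ∀ k, 0 ≤ SL.E fun ω => exp (t * min (X k ω) y) := fun k =>
    SL.E_nonneg fun ω => (exp_pos _).le
  have hfactor : ∀ k, (SL.E fun ω => exp (t * min (X k ω) y)).toReal ≤
      exp ((1 + δ) / 2 * t ^ 2 * b k + truncExpCoeff p δ t y * m k) := fun k =>
    calc (SL.E fun ω => exp (t * min (X k ω) y)).toReal
        ≤ 1 + (1 + δ) / 2 * t ^ 2 * b k + truncExpCoeff p δ t y * m k := by
          rw [← EReal.toReal_coe (1 + (1 + δ) / 2 * t ^ 2 * b k + truncExpCoeff p δ t y * m k)]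
          exact EReal.toReal_le_toReal (E_exp_mul_min_le hp hδ0 hδ1 ht hy (hX k) (hb k) (hm k))
            (ne_bot_of_le_ne_bot EReal.zero_ne_bot (hE0 k)) (EReal.coe_ne_top _)
      _ = (1 + δ) / 2 * t ^ 2 * b k + truncExpCoeff p δ t y * m k + 1 := by ring
      _ ≤ _ := add_one_le_exp _
  have hprod : ∏ k, (SL.E fun ω => exp (t * min (X k ω) y)).toReal ≤
      exp ((1 + δ) / 2 * t ^ 2 * ∑ k, b k + truncExpCoeff p δ t y * ∑ k, m k) := by
    rw [Finset.mul_sum, Finset.mul_sum, ← Finset.sum_add_distrib, exp_sum]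
    exact Finset.prod_le_prod (fun k _ => EReal.toReal_nonneg (hE0 k)) fun k _ => hfactor k
  refine (hU _ (fun _ => isBLip_exp_mul_min ht.le y) (fun _ => monotone_exp_mul_min ht.le y)
    fun _ _ => (exp_pos _).le).trans (EReal.coe_le_coe_iff.2 ?_)
  exact mul_le_mul_of_nonneg_left hprod (zero_le_one.trans hU.one_le)

theorem UENDFin.V_sum_ge_le_of_truncation {b m : Fin n → ℝ} (hU : SL.UENDFin K X) (hp : 0 < p)
    (hδ0 : 0 < δ) (hδ1 : δ ≤ 1) (ht : 0 < t) (hy : 0 < y) (hX : ∀ k, SL.E (X k) ≤ 0)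
    (hb : ∀ k, SL.E (fun ω => X k ω ^ 2) ≤ (b k : EReal))
    (hm : ∀ k, SL.E (fun ω => max (X k ω) 0 ^ p) ≤ (m k : EReal)) (x : ℝ) :
    SL.V {ω | x ≤ ∑ k, X k ω} ≤ (y ^ p)⁻¹ * ∑ k, m k + exp (-(t * x)) *
      (K * exp ((1 + δ) / 2 * t ^ 2 * ∑ k, b k + truncExpCoeff p δ t y * ∑ k, m k)) := by
  refine SL.V_le (ξ := fun ω => (y ^ p)⁻¹ * ∑ k, max (X k ω) 0 ^ p +
    exp (-(t * x)) * ∏ k, exp (t * min (X k ω) y)) (fun ω => by positivity)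
    (fun ω hω => one_le_sum_rpow_add_prod_exp hp.le ht.le hy hω) ?_
  exact SL.E_add_le
    (SL.E_const_mul_le (by positivity) (SL.E_sum_le Finset.univ fun k _ => hm k))
    (SL.E_const_mul_le (exp_pos _).le (hU.E_prod_exp_mul_min_le hp hδ0 hδ1 ht hy hX hb hm))

theorem UENDFin.V_sum_ge_le_of_le_div {x L : ℝ} {b m : Fin n → ℝ} (hU : SL.UENDFin K X)
    (hp : 0 < p) (hδ0 : 0 < δ) (hδ1 : δ ≤ 1) (hx : 0 < x) (hX : ∀ k, SL.E (X k) ≤ 0)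
    (hb : ∀ k, SL.E (fun ω => X k ω ^ 2) ≤ (b k : EReal))
    (hm : ∀ k, SL.E (fun ω => max (X k ω) 0 ^ p) ≤ (m k : EReal))
    (hL0 : 0 < L) (hL : L ≤ x ^ 2 / ((∑ k, b k) * (1 + δ))) :
    SL.V {ω | x ≤ ∑ k, X k ω} ≤ 4 ^ p * ((∑ k, m k) / x ^ p) + K * (exp (-L / 2) *
      exp ((8 * (1 + p)) ^ p * δ ^ (-p) * ((∑ k, m k) / x ^ p * exp (L / 4)))) := by
  have hK : 1 ≤ K := hU.one_le
  have htail : ((x / 4) ^ p)⁻¹ = 4 ^ p / x ^ p := by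
    rw [div_rpow hx.le (by norm_num), inv_div]
  have hquad : (1 + δ) / 2 * (L / x) ^ 2 * ∑ k, b k ≤ L / 2 := by
    have hb0 : 0 ≤ ∑ k, b k := Finset.sum_nonneg fun k _ =>
      EReal.coe_nonneg.1 ((SL.E_nonneg fun ω => sq_nonneg (X k ω)).trans (hb k))
    have hmul : L * ((∑ k, b k) * (1 + δ)) ≤ x ^ 2 :=
      mul_le_of_le_div₀ (sq_nonneg x) (by positivity) hL
    calc (1 + δ) / 2 * (L / x) ^ 2 * ∑ k, b k
        = L / 2 * (L * ((∑ k, b k) * (1 + δ))) / x ^ 2 := by ring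
      _ ≤ L / 2 * x ^ 2 / x ^ 2 := by gcongr
      _ = L / 2 := mul_div_cancel_right₀ _ (by positivity)
  have hcoeff : truncExpCoeff p δ (L / x) (x / 4) * ∑ k, m k =
      (8 * (1 + p)) ^ p * δ ^ (-p) * ((∑ k, m k) / x ^ p * exp (L / 4)) := by
    rw [truncExpCoeff_div_div_four hp.le hδ0.le L hx]
    ring
  calc SL.V {ω | x ≤ ∑ k, X k ω}
      ≤ 4 ^ p / x ^ p * ∑ k, m k + exp (-L) * (K * exp (L / 2 +
        (8 * (1 + p)) ^ p * δ ^ (-p) * ((∑ k, m k) / x ^ p * exp (L / 4)))) := by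
        have h := hU.V_sum_ge_le_of_truncation hp hδ0 hδ1 (div_pos hL0 hx)
          (by positivity : 0 < x / 4) hX hb hm x
        rw [htail, hcoeff, div_mul_cancel₀ L hx.ne'] at h
        exact h.trans (by gcongr)
    _ = _ := by
        have hexp : exp (-L) * exp (L / 2) = exp (-L / 2) := by rw [← exp_add]; ring_nf
        rw [exp_add, ← hexp]
        ring

end UpperExtendedNegativeDependence

end SublinearExp

/-- The constant `C_p` of the moment/exponential inequality. Here `4 ^ p` comes from truncating at
`y = x / 4`, and `(8 * (1 + p)) ^ p` from `truncExpCoeff` at that level. -/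
def momentExpConst (p : ℝ) : ℝ :=
  4 ^ p + 1 + (8 * (1 + p)) ^ p * Real.exp ((8 * (1 + p)) ^ p)

theorem one_le_momentExpConst {p : ℝ} (hp : 0 ≤ p) : 1 ≤ momentExpConst p := by
  rw [momentExpConst, add_right_comm]
  exact le_add_of_nonneg_left (by positivity)

theorem stmt1_general {p : ℝ} (hp : 0 < p) :
    ∃ C : ℝ, 1 ≤ C ∧
      ∀ (Ω : Type) (SL : SublinearExp Ω) (n : ℕ) (X : Fin n → Ω → ℝ) (K : ℝ),
        SublinearExp.UENDFin SL K X →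
        (∀ k, SL.E (X k) ≤ 0) →
        ∀ B M : ℝ,
          (B : EReal) = (∑ k, SL.E fun ω => (X k ω) ^ 2) →
          (M : EReal) = (∑ k, SL.E fun ω => (max (X k ω) 0) ^ p) →
          ∀ x δ : ℝ, 0 < x → 0 < δ → δ ≤ 1 →
            SL.V {ω | x ≤ ∑ k, X k ω} ≤
              C * δ ^ (-(2 * p)) * K * (M / x ^ p) +
                K * Real.exp (-(x ^ 2 / (2 * B * (1 + δ)))) := by
  refine ⟨momentExpConst p, one_le_momentExpConst hp.le, ?_⟩
  intro Ω SL n X K hU hX B M hB hM x δ hx hδ0 hδ1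
  obtain ⟨b, hb, -, rfl⟩ := SL.exists_E_eq_coe_of_sum_eq_coe (fun k ω => sq_nonneg (X k ω)) hB
  obtain ⟨m, hm, hm0, rfl⟩ := SL.exists_E_eq_coe_of_sum_eq_coe
    (fun k ω => Real.rpow_nonneg (le_max_right (X k ω) 0) p) hM
  have hsum_m : 0 ≤ ∑ k, m k := Finset.sum_nonneg fun k _ => hm0 k
  have hδp : 1 ≤ δ ^ (-p) :=
    Real.one_le_rpow_of_pos_of_le_one_of_nonpos hδ0 hδ1 (neg_nonpos.2 hp.le)
  have hδ2p : δ ^ (-(2 * p)) = (δ ^ (-p)) ^ 2 := by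
    rw [← Real.rpow_mul_natCast hδ0.le]
    ring_nf
  have hexponent : -(x ^ 2 / (2 * (∑ k, b k) * (1 + δ))) =
      -(x ^ 2 / ((∑ k, b k) * (1 + δ))) / 2 := by
    rw [mul_assoc, mul_comm 2, ← div_div, neg_div]
  rw [hδ2p, hexponent]
  exact le_of_forall_le_add_exp (by positivity) (by positivity) hδp (by positivity) hU.one_le
    (SL.V_le_one _) fun L hL0 hL => hU.V_sum_ge_le_of_le_div hp hδ0 hδ1 hx hX
      (fun k => (hb k).le) (fun k => (hm k).le) hL0 hL

/-- Theorem 3.1(b): moment/exponential inequality; the constant `C_p ≥ 1`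
depends only on `p`. -/
theorem stmt1 (p : ℝ) (hp : 2 ≤ p) :
    ∃ C : ℝ, 1 ≤ C ∧
      ∀ (Ω : Type) (SL : SublinearExp Ω) (n : ℕ) (X : Fin n → Ω → ℝ) (K : ℝ),
        1 ≤ K →
        SublinearExp.UENDFin SL K X →
        (∀ k, SL.E (X k) ≤ 0) →
        ∀ B M : ℝ,
          (B : EReal) = (∑ k, SL.E fun ω => (X k ω) ^ 2) →
          (M : EReal) = (∑ k, SL.E fun ω => (max (X k ω) 0) ^ p) →
          ∀ x δ : ℝ, 0 < x → 0 < δ → δ ≤ 1 →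
            SL.V {ω | x ≤ ∑ k, X k ω} ≤
              C * δ ^ (-(2 * p)) * K * (M / x ^ p) +
                K * Real.exp (-(x ^ 2 / (2 * B * (1 + δ)))) := by
  obtain ⟨C, hC, hbound⟩ := stmt1_general (zero_lt_two.trans_le hp)
  exact ⟨C, hC, fun Ω SL n X K _ => hbound Ω SL n X K⟩
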